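/- For every integer t ≥ 1, define f(t) = C(t, ⌊t/2⌋) · ⌈t/2⌉^⌈t/2⌉ · (⌊t/2⌋+1)^⌊t/2⌋ / (t+1)^t. Then f(t) < 1/√(3t/2 + 1). -/

import Mathlib

/-!
Each parity is compared with the bound `C(2n, n) / 4 ^ n ≤ 1 / √(3n + 1)`. If `t = 2m`, then `f(t)`
is `C(2m, m) / 4 ^ m` times `(4m(m + 1) / (2m + 1)²) ^ m`, which is less than `1` by AM-GM. If
`t = 2m + 1`, the powers cancel and `f(t) = C(2m + 1, m) / 2 ^ (2m + 1) = C(2n, n) / 4 ^ n` with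
`n = m + 1`, and `3n + 1` exceeds `3t / 2 + 1`.
-/

open Nat (centralBinom)

theorem centralBinom_sq_mul_le (n : ℕ) :
    centralBinom n ^ 2 * (3 * n + 1) ≤ (4 ^ n) ^ 2 := by
  induction n with
  | zero => simp
  | succ n ih =>
    have ratio_le : (2 * n + 1) ^ 2 * (3 * n + 4) ≤ 4 * (n + 1) ^ 2 * (3 * n + 1) := by
      nlinarith
    refine Nat.le_of_mul_le_mul_left (c := (n + 1) ^ 2) ?_ (by positivity)
    calc (n + 1) ^ 2 * (centralBinom (n + 1) ^ 2 * (3 * (n + 1) + 1))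
        = ((n + 1) * centralBinom (n + 1)) ^ 2 * (3 * n + 4) := by ring
      _ = 4 * centralBinom n ^ 2 * ((2 * n + 1) ^ 2 * (3 * n + 4)) := by
        rw [Nat.succ_mul_centralBinom_succ]; ring
      _ ≤ 4 * centralBinom n ^ 2 * (4 * (n + 1) ^ 2 * (3 * n + 1)) := by gcongr
      _ = 16 * (n + 1) ^ 2 * (centralBinom n ^ 2 * (3 * n + 1)) := by ring
      _ ≤ 16 * (n + 1) ^ 2 * (4 ^ n) ^ 2 := by gcongr
      _ = (n + 1) ^ 2 * (4 ^ (n + 1)) ^ 2 := by ring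

theorem centralBinom_div_four_pow_le (n : ℕ) :
    (centralBinom n : ℝ) / 4 ^ n ≤ 1 / √(3 * n + 1) := by
  rw [div_le_div_iff₀ (by positivity) (by positivity), one_mul]
  refine le_of_sq_le_sq ?_ (by positivity)
  rw [mul_pow, Real.sq_sqrt (by positivity)]
  exact_mod_cast centralBinom_sq_mul_le n

theorem centralBinom_succ_eq_two_mul_choose (n : ℕ) :
    centralBinom (n + 1) = 2 * (2 * n + 1).choose n := by
  rw [Nat.centralBinom_eq_two_mul_choose, Nat.mul_succ, Nat.choose_succ_succ, Nat.choose_symm_half,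
    ← two_mul]

section Field

variable {K : Type*} [Field K]

theorem choose_div_two_pow_eq_centralBinom_div_four_pow [NeZero (2 : K)] (n : ℕ) :
    ((2 * n + 1).choose n : K) / 2 ^ (2 * n + 1) = centralBinom (n + 1) / 4 ^ (n + 1) := by
  have four_pow : (4 : K) ^ (n + 1) = 2 * 2 ^ (2 * n + 1) := by
    rw [← pow_succ', show (4 : K) = 2 ^ 2 by norm_num, ← pow_mul, Nat.mul_succ]
  rw [centralBinom_succ_eq_two_mul_choose, four_pow, Nat.cast_mul, Nat.cast_ofNat,
    mul_div_mul_left _ _ two_ne_zero]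

theorem pow_mul_pow_div_two_mul_pow {x : K} (hx : x ≠ 0) (m n : ℕ) :
    x ^ m * x ^ n / (2 * x) ^ (m + n) = 1 / 2 ^ (m + n) := by
  rw [mul_pow, ← pow_add, div_mul_cancel_right₀ (pow_ne_zero _ hx), one_div]

theorem pow_mul_pow_div_add_pow_lt [LinearOrder K] [IsStrictOrderedRing K] {x y : K}
    (hmul : 0 ≤ x * y) (hne : x ≠ y) {n : ℕ} (hn : n ≠ 0) :
    x ^ n * y ^ n / (x + y) ^ (2 * n) < 1 / 4 ^ n := by
  have four_mul_lt : x * y * 4 < (x + y) ^ 2 := by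
    linarith [sq_pos_of_ne_zero (sub_ne_zero.2 hne)]
  have sq_add_pos : 0 < (x + y) ^ 2 := by linarith
  rw [pow_mul, div_lt_div_iff₀ (pow_pos sq_add_pos n) (by positivity), one_mul, ← mul_pow,
    ← mul_pow]
  exact pow_lt_pow_left₀ four_mul_lt (by positivity) hn

theorem choose_mul_pow_mul_pow_div_eq [CharZero K] (m : ℕ) :
    ((2 * m + 1).choose m : K) * (m + 1) ^ (m + 1) * (m + 1) ^ m / (2 * m + 1 + 1) ^ (2 * m + 1) =
      centralBinom (m + 1) / 4 ^ (m + 1) := by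
  have exponent : 2 * m + 1 = m + 1 + m := by ring
  have base : (2 * m + 1 + 1 : K) = 2 * (m + 1) := by ring
  rw [← choose_div_two_pow_eq_centralBinom_div_four_pow, base, mul_assoc, mul_div_assoc, exponent,
    pow_mul_pow_div_two_mul_pow (Nat.cast_add_one_ne_zero m), mul_one_div]

theorem centralBinom_mul_pow_mul_pow_div_lt [LinearOrder K] [IsStrictOrderedRing K] {m : ℕ}
    (hm : m ≠ 0) :
    (centralBinom m : K) * m ^ m * (m + 1) ^ m / (2 * m + 1) ^ (2 * m) <
      centralBinom m / 4 ^ m := by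
  have centralBinom_pos : (0 : K) < centralBinom m := mod_cast m.centralBinom_pos
  have m_ne_succ : (m : K) ≠ m + 1 := by simp
  have ratio_lt := pow_mul_pow_div_add_pow_lt (by positivity) m_ne_succ hm
  calc (centralBinom m : K) * m ^ m * (m + 1) ^ m / (2 * m + 1) ^ (2 * m)
      = centralBinom m * (m ^ m * (m + 1) ^ m / (m + (m + 1)) ^ (2 * m)) := by
        rw [two_mul (m : K), add_assoc, mul_assoc, mul_div_assoc]
    _ < centralBinom m * (1 / 4 ^ m) := mul_lt_mul_of_pos_left ratio_lt centralBinom_pos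
    _ = centralBinom m / 4 ^ m := mul_one_div _ _

end Field

theorem stmt_2 (t : ℕ) (ht : 1 ≤ t) :
    (Nat.choose t (t / 2) : ℝ) * ((t + 1) / 2 : ℕ) ^ ((t + 1) / 2) *
        (t / 2 + 1 : ℕ) ^ (t / 2) / ((t : ℝ) + 1) ^ t
      < 1 / Real.sqrt (3 * t / 2 + 1) := by
  obtain ⟨m, rfl | rfl⟩ := Nat.even_or_odd' t
  · have hm : m ≠ 0 := by lia
    have floor : 2 * m / 2 = m := by lia
    have ceil : (2 * m + 1) / 2 = m := by lia
    have radicand : 3 * ((2 * m : ℕ) : ℝ) / 2 + 1 = 3 * m + 1 := by push_cast; ring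
    rw [floor, ceil, radicand, ← Nat.centralBinom_eq_two_mul_choose]
    push_cast
    exact (centralBinom_mul_pow_mul_pow_div_lt hm).trans_le
      (centralBinom_div_four_pow_le m)
  · have floor : (2 * m + 1) / 2 = m := by lia
    have ceil : (2 * m + 1 + 1) / 2 = m + 1 := by lia
    rw [floor, ceil]
    push_cast
    rw [choose_mul_pow_mul_pow_div_eq]
    calc (centralBinom (m + 1) : ℝ) / 4 ^ (m + 1)
        ≤ 1 / √(3 * (m + 1 : ℕ) + 1) := centralBinom_div_four_pow_le (m + 1)
      _ < 1 / √(3 * (2 * m + 1) / 2 + 1) := by gcongr; push_cast; linarith
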